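/- Let $p < q$ be primes with $p \mid q - 1$, and let $G$ be a non-abelian group of order $pq$. Then $S(G) = pq = |G|$. -/

import Mathlib

/-- For a finite group `G`, `phiG G` is the number of elements of `G` whose order
equals the exponent of `G` (a group-theoretic generalization of Euler's totient). -/
noncomputable def phiG (G : Type*) [Group G] : ℕ :=
  Nat.card {a : G // orderOf a = Monoid.exponent G}

/-- `SG G` is the sum of `phiG H` over all subgroups `H` of `G`. -/
noncomputable def SG (G : Type*) [Group G] : ℕ :=
  ∑ᶠ H : Subgroup G, phiG H

/-!
In a finite Z-group every subgroup `H` is again a Z-group, so its exponent is its order, and the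
elements counted by `phiG H` are exactly the generators of `H`. Each element of `G` generates
exactly one subgroup, so these counts add up to `|G|`. A group of order `p * q` has squarefree
order and is therefore a Z-group.
-/

section

variable {G : Type*} [Group G]

theorem zpowers_eq_iff_orderOf_eq_card {H : Subgroup G} [Finite H] {a : G} (ha : a ∈ H) :
    Subgroup.zpowers a = H ↔ orderOf a = Nat.card H := by
  rw [← Nat.card_zpowers]
  exact ⟨fun h ↦ by rw [h],
    fun h ↦ Subgroup.eq_of_le_of_card_ge (Subgroup.zpowers_le.mpr ha) h.ge⟩

theorem orderOf_eq_exponent_iff_zpowers_eq {H : Subgroup G} [Finite H] [IsZGroup H] (a : H) :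
    orderOf a = Monoid.exponent H ↔ Subgroup.zpowers (a : G) = H := by
  rw [zpowers_eq_iff_orderOf_eq_card a.2, Subgroup.orderOf_coe, IsZGroup.exponent_eq_card]

theorem phiG_eq_card_zpowers_eq (H : Subgroup G) [Finite H] [IsZGroup H] :
    phiG H = Nat.card {a : G // Subgroup.zpowers a = H} := by
  have hmem {a : G} (ha : Subgroup.zpowers a = H) : a ∈ H := ha ▸ Subgroup.mem_zpowers a
  simp only [phiG, orderOf_eq_exponent_iff_zpowers_eq]
  exact Nat.card_congr (Equiv.subtypeSubtypeEquivSubtype hmem)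

end

theorem finsum_card_fiber {α β : Type*} [Finite α] [Finite β] (f : α → β) :
    ∑ᶠ b, Nat.card {a // f a = b} = Nat.card α := by
  have := Fintype.ofFinite β
  rw [finsum_eq_sum_of_fintype, ← Nat.card_sigma, Nat.card_congr (Equiv.sigmaFiberEquiv f)]

theorem stmt_16_general (G : Type*) [Group G] [Finite G] [IsZGroup G] : SG G = Nat.card G :=
  calc
    SG G = ∑ᶠ H : Subgroup G, Nat.card {a : G // Subgroup.zpowers a = H} :=
      finsum_congr fun H ↦ phiG_eq_card_zpowers_eq H
    _ = Nat.card G := finsum_card_fiber Subgroup.zpowers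

theorem isZGroup_of_card_eq_prime_mul_prime {p q : ℕ} (hp : p.Prime) (hq : q.Prime) (hpq : p ≠ q)
    {G : Type*} [Group G] (hcard : Nat.card G = p * q) : IsZGroup G := by
  have hcoprime : p.Coprime q := (Nat.coprime_primes hp hq).mpr hpq
  refine .of_squarefree ?_
  rw [hcard, Nat.squarefree_mul hcoprime]
  exact ⟨hp.prime.squarefree, hq.prime.squarefree⟩

theorem stmt_16 (p q : ℕ) (hp : p.Prime) (hq : q.Prime) (hpq : p < q)
    (hdvd : p ∣ q - 1) (G : Type*) [Group G] [Fintype G]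
    (hcard : Nat.card G = p * q) (hna : ¬ ∀ a b : G, a * b = b * a) :
    SG G = p * q := by
  have := isZGroup_of_card_eq_prime_mul_prime hp hq hpq.ne hcard
  rw [stmt_16_general, hcard]
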